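/- Fix an integer d ≥ 2, a unit vector ψ ∈ ℂ^d, and η ∈ [0,1], and set ρ := η|ψ⟩⟨ψ| + ((1−η)/d)·1_d. There exists a single-call deterministic superchannel S satisfying S ⋆ U = U̅ ρ Uᵀ for every U ∈ SU(d) (deterministic and exact unitary complex conjugation on the known mixed state ρ) if and only if d = 2 or η ≤ 1/(d+1). -/

import Mathlib

open Matrix Kronecker BigOperators ComplexOrder

noncomputable section

/-- Entrywise complex conjugate `U̅` of a matrix. -/
def mconj {d : ℕ} (U : Matrix (Fin d) (Fin d) ℂ) : Matrix (Fin d) (Fin d) ℂ :=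
  U.map (starRingEnd ℂ)

/-- Rank-one outer product `|v⟩⟨v|`. -/
def outer {n : Type*} (v : n → ℂ) : Matrix n n ℂ :=
  Matrix.vecMulVec v (star v)

/-- Choi vector `|U⟩⟩ = Σ_i e_i ⊗ U e_i`. -/
def choiVec {d : ℕ} (U : Matrix (Fin d) (Fin d) ℂ) : Fin d × Fin d → ℂ :=
  fun p => U p.2 p.1

/-- `|U⟩⟩⟨⟨U|`. -/
def choiProj {d : ℕ} (U : Matrix (Fin d) (Fin d) ℂ) :
    Matrix (Fin d × Fin d) (Fin d × Fin d) ℂ :=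
  outer (choiVec U)

/-- Partial trace over the first tensor factor. -/
def ptrLeft {α β : Type*} [Fintype α] (S : Matrix (α × β) (α × β) ℂ) :
    Matrix β β ℂ :=
  fun b b' => ∑ a, S (a, b) (a, b')

/-- Partial trace over the second (last) tensor factor. -/
def ptrRight {α β : Type*} [Fintype β] (S : Matrix (α × β) (α × β) ℂ) :
    Matrix α α ℂ :=
  fun a a' => ∑ b, S (a, b) (a', b)

/-- Action `S ⋆ U := Tr_{IO}[ S · (|U̅⟩⟩⟨⟨U̅|_{IO} ⊗ 1_F) ]` of a single-call
supermap `S` on `I ⊗ O ⊗ F` applied to the unitary channel given by `U`. -/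
def act {d dF : ℕ}
    (S : Matrix ((Fin d × Fin d) × Fin dF) ((Fin d × Fin d) × Fin dF) ℂ)
    (U : Matrix (Fin d) (Fin d) ℂ) : Matrix (Fin dF) (Fin dF) ℂ :=
  ptrLeft (S * (choiProj (mconj U) ⊗ₖ (1 : Matrix (Fin dF) (Fin dF) ℂ)))

/-- A single-call deterministic superchannel (channels-to-states):
`S ≥ 0` with `Tr_F(S) = σ ⊗ 1_d`, `σ ≥ 0`, `Tr σ = 1`. -/
def IsSuperchannel {d dF : ℕ}
    (S : Matrix ((Fin d × Fin d) × Fin dF) ((Fin d × Fin d) × Fin dF) ℂ) : Prop :=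
  S.PosSemidef ∧
    ∃ σ : Matrix (Fin d) (Fin d) ℂ, σ.PosSemidef ∧ σ.trace = 1 ∧
      ptrRight S = σ ⊗ₖ (1 : Matrix (Fin d) (Fin d) ℂ)

/-!
If `S` implements conjugation on `ρ`, then `T = S - ρᵀ ⊗ flip` sends every unitary channel to `0`.
For each pair of output indices this gives an operator on `ℂᵈ ⊗ ℂᵈ` whose quadratic form vanishes
at all `|U⟩⟩`, and such an operator has the form `s ⊗ 1 + 1 ⊗ t`: varying the phases of a monomial
unitary kills every entry that is off-diagonal in both factors, and since this remains true after
conjugation by local unitaries (square roots of transpositions suffice), the off-diagonal blocks and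
the differences of diagonal blocks are scalar. Hence `Tr S (X ⊗ flip)` is determined by `ρ` and `σ`
when `X` is traceless, and pairing `S` with a positive operator whose flip part is traceless bounds
`⟨v|ρ|v⟩` by `2/(d + 1)` when `d ≥ 3`.

Conversely `X ⊗ (1 ± flip)`, with `X` an affine function of `ρᵀ`, implements conjugation exactly;
the sign `+` keeps `X ≥ 0` as long as `ρ ≥ 1/(d + 1)`, and the sign `-` always does when `d = 2`.
-/

section UnitaryForms

variable {n : Type*} [Fintype n]

lemma isDiag_of_forall_phase_dotProduct_mulVec_eq_zero (C : Matrix n n ℂ)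
    (hC : ∀ z : n → ℂ, (∀ j, star (z j) * z j = 1) → star z ⬝ᵥ C *ᵥ z = 0) : C.IsDiag := by
  classical
  intro i k hik
  let u : n → ℂ := fun j => if j = i ∨ j = k then 0 else 1
  have form_eq_zero (a b : ℂ) (ha : star a * a = 1) (hb : star b * b = 1) :
      star (u + Pi.single i a + Pi.single k b) ⬝ᵥ
        C *ᵥ (u + Pi.single i a + Pi.single k b) = 0 := by
    refine hC _ fun j => ?_
    by_cases hji : j = i
    · subst hji; simpa [u, hik] using ha
    by_cases hjk : j = k
    · subst hjk; simpa [u, hji] using hb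
    simp [u, hji, hjk]
  simp only [star_add, Pi.star_single, mulVec_add, dotProduct_add, add_dotProduct,
    single_dotProduct, mulVec_single, op_smul_eq_smul, dotProduct_smul, smul_eq_mul, col_apply]
    at form_eq_zero
  have cross_terms (a : ℂ) (ha : star a * a = 1) : star a * C i k + a * C k i = 0 := by
    have ha' : star (-a) * -a = 1 := by simpa using ha
    have h₁ : star (1 : ℂ) * 1 = 1 := by simp
    have h₂ : star (-1 : ℂ) * -1 = 1 := by simp
    have h := congr($(form_eq_zero a 1 ha h₁) - $(form_eq_zero a (-1) ha h₂)
      - $(form_eq_zero (-a) 1 ha' h₁) + $(form_eq_zero (-a) (-1) ha' h₂))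
    simp only [star_one, star_neg] at h
    linear_combination h / 4
  have h_one := cross_terms 1 (by simp)
  have h_I := cross_terms Complex.I (by simp)
  simp only [star_one, Complex.star_def, Complex.conj_I] at h_one h_I
  linear_combination h_one / 2 + Complex.I / 2 * h_I + (C i k - C k i) / 2 * Complex.I_sq

variable [DecidableEq n]

/-- A square root of the transposition matrix `Matrix.swap ℂ i j`. -/
def sqrtSwap (i j : n) : Matrix n n ℂ :=
  ((1 + Complex.I) / 2) • (1 : Matrix n n ℂ) + ((1 - Complex.I) / 2) • Matrix.swap ℂ i j

lemma sqrtSwap_mem_unitaryGroup (i j : n) : sqrtSwap i j ∈ unitaryGroup n ℂ := by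
  rw [mem_unitaryGroup_iff, star_eq_conjTranspose]
  simp only [sqrtSwap, conjTranspose_add, conjTranspose_smul, conjTranspose_one, conjTranspose_swap,
    add_mul, mul_add, smul_mul_assoc, mul_smul_comm, mul_one, one_mul, swap_mul_self]
  match_scalars <;>
    simp only [star_div₀, star_add, star_one, RCLike.star_def, Complex.conj_I, star_ofNat, mul_one,
      star_sub, sub_neg_eq_add]
  · linear_combination (-1 / 2 : ℂ) * Complex.I_sq
  · linear_combination (1 / 2 : ℂ) * Complex.I_sq

lemma exists_eq_smul_one_of_forall_unitary_conj_isDiag (A : Matrix n n ℂ)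
    (hA : ∀ V ∈ unitaryGroup n ℂ, (Vᴴ * A * V).IsDiag) : ∃ c : ℂ, A = c • 1 := by
  have isDiag_A : A.IsDiag := by simpa using hA 1 (one_mem _)
  have diag_eq (i j : n) : A i i = A j j := by
    by_cases hij : i = j
    · rw [hij]
    have hsqrt := hA _ (sqrtSwap_mem_unitaryGroup i j) hij
    simp only [sqrtSwap, conjTranspose_add, conjTranspose_smul, star_div₀, star_add, star_one,
      RCLike.star_def, Complex.conj_I, star_ofNat, conjTranspose_one, star_sub, sub_neg_eq_add,
      conjTranspose_swap, add_mul, Algebra.smul_mul_assoc, one_mul, mul_add, Algebra.mul_smul_comm,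
      mul_one, smul_add, Matrix.add_apply, Matrix.smul_apply, isDiag_A hij, smul_eq_mul, mul_zero,
      swap_mul_apply_left, zero_add, mul_swap_apply_right, isDiag_A (Ne.symm hij), add_zero]
      at hsqrt
    linear_combination 2 * Complex.I * hsqrt
      - ((Complex.I + 2) / 2 * A j j + (Complex.I - 2) / 2 * A i i) * Complex.I_sq
  rcases isEmpty_or_nonempty n with _ | ⟨⟨j⟩⟩
  · exact ⟨0, Subsingleton.elim _ _⟩
  refine ⟨A j j, ?_⟩
  ext i k
  by_cases hik : i = k
  · subst hik; simp [diag_eq i j]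
  · simp [isDiag_A hik, hik]

lemma exists_phase_smul_mem_specialUnitaryGroup [Nonempty n] {U : Matrix n n ℂ}
    (hU : U ∈ unitaryGroup n ℂ) :
    ∃ c : ℂ, star c * c = 1 ∧ c • U ∈ specialUnitaryGroup n ℂ := by
  have norm_det : ‖U.det‖ = 1 := CStarRing.norm_of_mem_unitary (det_of_mem_unitary hU)
  obtain ⟨c, hc⟩ := IsAlgClosed.exists_pow_nat_eq (star U.det) (Fintype.card_pos (α := n))
  have norm_c : ‖c‖ = 1 := by
    rw [← pow_eq_one_iff_of_nonneg (norm_nonneg c) (Fintype.card_ne_zero (α := n)), ← norm_pow, hc,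
      norm_star, norm_det]
  have star_c_mul : star c * c = 1 := by
    rw [Complex.star_def, Complex.conj_mul', norm_c]
    norm_num
  refine ⟨c, star_c_mul, mem_specialUnitaryGroup_iff.mpr ⟨?_, ?_⟩⟩
  · rw [mem_unitaryGroup_iff', star_smul, smul_mul_smul_comm, star_c_mul, one_smul,
      mem_unitaryGroup_iff'.mp hU]
  · rw [det_smul, hc, ← Unitary.star_mul_self_of_mem (det_of_mem_unitary hU)]

/-- The quadratic form `|U⟩⟩ ↦ ⟨⟨U|M|U⟩⟩` of `M` vanishes at every unitary `U`; here `|U⟩⟩` is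
Mathlib's column-major `Matrix.vec U`, which agrees with `choiVec U`. -/
def VanishesOnUnitaries (M : Matrix (n × n) (n × n) ℂ) : Prop :=
  ∀ U ∈ unitaryGroup n ℂ, star (vec U) ⬝ᵥ M *ᵥ vec U = 0

lemma submatrix_one_kronecker_conj (M : Matrix (n × n) (n × n) ℂ) (V : Matrix n n ℂ) (i i' : n) :
    (((1 : Matrix n n ℂ) ⊗ₖ V)ᴴ * M * ((1 : Matrix n n ℂ) ⊗ₖ V)).submatrix
        (Prod.mk i) (Prod.mk i') =
      Vᴴ * M.submatrix (Prod.mk i) (Prod.mk i') * V := by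
  ext o o'
  simp [mul_apply, Fintype.sum_prod_type, one_apply, apply_ite star]

lemma submatrix_kronecker_one_conj (M : Matrix (n × n) (n × n) ℂ) (W : Matrix n n ℂ) (o o' : n) :
    ((W ⊗ₖ (1 : Matrix n n ℂ))ᴴ * M * (W ⊗ₖ (1 : Matrix n n ℂ))).submatrix (·, o) (·, o') =
      Wᴴ * M.submatrix (·, o) (·, o') * W := by
  ext i i'
  simp [mul_apply, Fintype.sum_prod_type, one_apply, apply_ite star]

namespace VanishesOnUnitaries

variable {M : Matrix (n × n) (n × n) ℂ}

lemma kronecker_conj (hM : VanishesOnUnitaries M) {V W : Matrix n n ℂ} (hV : V ∈ unitaryGroup n ℂ)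
    (hW : W ∈ unitaryGroup n ℂ) : VanishesOnUnitaries ((W ⊗ₖ V)ᴴ * M * (W ⊗ₖ V)) := by
  intro U hU
  have hVUW : V * U * Wᵀ ∈ unitaryGroup n ℂ :=
    mul_mem (mul_mem hV hU) (transpose_mem_unitaryGroup_iff.mpr hW)
  rw [← hM _ hVUW, ← kronecker_mulVec_vec, star_mulVec, ← mulVec_mulVec, ← mulVec_mulVec,
    dotProduct_mulVec]

lemma apply_eq_zero (hM : VanishesOnUnitaries M) {i i' o o' : n} (hi : i ≠ i') (ho : o ≠ o') :
    M (i, o) (i', o') = 0 := by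
  obtain ⟨π, rfl, rfl⟩ := MulAction.is_two_pretransitive_iff.mp
    (Equiv.Perm.isMultiplyPretransitive n 2) hi ho
  refine isDiag_of_forall_phase_dotProduct_mulVec_eq_zero
    (M.submatrix (fun j => (j, π j)) fun j => (j, π j)) (fun z hz => ?_) hi
  let U : Matrix n n ℂ := of fun o j => if o = π j then z j else 0
  have hU : U ∈ unitaryGroup n ℂ := by
    rw [mem_unitaryGroup_iff']
    ext j k
    by_cases hjk : j = k
    · subst hjk
      simpa [U, mul_apply, apply_ite star] using hz j
    · simp [U, mul_apply, apply_ite star, hjk, Ne.symm hjk]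
  rw [← hM U hU]
  simp only [dotProduct, mulVec, Pi.star_apply, submatrix_apply, vec, Fintype.sum_prod_type, U,
    of_apply]
  simp [apply_ite star]

lemma exists_block_eq_smul_one (hM : VanishesOnUnitaries M) {i i' : n} (hi : i ≠ i') :
    ∃ c : ℂ, M.submatrix (Prod.mk i) (Prod.mk i') = c • 1 := by
  refine exists_eq_smul_one_of_forall_unitary_conj_isDiag _ fun V hV o o' ho => ?_
  rw [← submatrix_one_kronecker_conj]
  exact (hM.kronecker_conj hV (one_mem _)).apply_eq_zero hi ho

lemma exists_block_sub_eq_smul_one (hM : VanishesOnUnitaries M) (o₀ o o' : n) :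
    ∃ c : ℂ, M.submatrix (·, o) (·, o') -
      (1 : Matrix n n ℂ) o o' • M.submatrix (·, o₀) (·, o₀) = c • 1 := by
  refine exists_eq_smul_one_of_forall_unitary_conj_isDiag _ fun W hW i i' hi => ?_
  obtain ⟨c, hc⟩ := (hM.kronecker_conj (one_mem _) hW).exists_block_eq_smul_one hi
  have block_apply (p q : n) :
      (Wᴴ * M.submatrix (·, p) (·, q) * W) i i' = c * (1 : Matrix n n ℂ) p q := by
    rw [← submatrix_kronecker_one_conj]
    exact congr_fun₂ hc p q
  rw [mul_sub, sub_mul, mul_smul_comm, smul_mul_assoc, Matrix.sub_apply, Matrix.smul_apply,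
    block_apply, block_apply, one_apply_eq, smul_eq_mul]
  ring

theorem exists_eq_kronecker_one_add_one_kronecker (hM : VanishesOnUnitaries M) :
    ∃ s t : Matrix n n ℂ, M = s ⊗ₖ 1 + 1 ⊗ₖ t := by
  rcases isEmpty_or_nonempty n with _ | ⟨⟨o₀⟩⟩
  · exact ⟨0, 0, Subsingleton.elim _ _⟩
  choose t ht using hM.exists_block_sub_eq_smul_one o₀
  refine ⟨M.submatrix (·, o₀) (·, o₀), of t, ?_⟩
  ext ⟨i, o⟩ ⟨i', o'⟩
  have h := congr_fun₂ (ht o o') i i'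
  simp only [Matrix.sub_apply, Matrix.smul_apply, submatrix_apply, smul_eq_mul] at h
  simp only [Matrix.add_apply, kroneckerMap_apply, submatrix_apply, of_apply]
  linear_combination h

lemma of_specialUnitaryGroup
    (hM : ∀ U ∈ specialUnitaryGroup n ℂ, star (vec U) ⬝ᵥ M *ᵥ vec U = 0) :
    VanishesOnUnitaries M := by
  intro U hU
  rcases isEmpty_or_nonempty n with _ | _
  · simp [dotProduct]
  obtain ⟨c, hc, hcU⟩ := exists_phase_smul_mem_specialUnitaryGroup hU
  have h := hM _ hcU
  rwa [vec_smul, star_smul, mulVec_smul, smul_dotProduct, dotProduct_smul, smul_smul, hc,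
    one_smul] at h

end VanishesOnUnitaries

end UnitaryForms

section PositiveMatrices

variable {n : Type*} [Fintype n]

lemma trace_mul_nonneg {A B : Matrix n n ℂ} (hA : A.PosSemidef) (hB : B.PosSemidef) :
    0 ≤ (A * B).trace := by
  obtain ⟨m, v, rfl⟩ := posSemidef_iff_eq_sum_vecMulVec.mp hB
  rw [Finset.mul_sum, trace_sum]
  refine Finset.sum_nonneg fun i _ => ?_
  rw [mul_vecMulVec, trace_vecMulVec, dotProduct_comm]
  exact hA.dotProduct_mulVec_nonneg (v i)

lemma posSemidef_one_add_of_mul_self_eq_one [DecidableEq n] {A : Matrix n n ℂ} (hA : A.IsHermitian)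
    (hAA : A * A = 1) : (1 + A).PosSemidef := by
  have square : (1 + A)ᴴ * (1 + A) = (2 : ℂ) • (1 + A) := by
    rw [conjTranspose_add, conjTranspose_one, hA.eq, add_mul, mul_add, mul_add, hAA]
    simp only [mul_one, one_mul, two_smul]
    abel
  have half_square : 1 + A = (2⁻¹ : ℂ) • ((1 + A)ᴴ * (1 + A)) := by
    rw [square, inv_smul_smul₀ two_ne_zero]
  rw [half_square]
  exact (posSemidef_conjTranspose_mul_self _).smul (by simp)

lemma trace_outer {v : n → ℂ} (hv : star v ⬝ᵥ v = 1) : (outer v).trace = 1 := by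
  rw [outer, trace_vecMulVec, dotProduct_comm, hv]

lemma posSemidef_one_sub_outer [DecidableEq n] {v : n → ℂ} (hv : star v ⬝ᵥ v = 1) :
    (1 - outer v).PosSemidef := by
  have isStarProjection_outer : IsStarProjection (outer v) :=
    ⟨by simp [IsIdempotentElem, outer, vecMulVec_mul_vecMulVec, hv],
      (posSemidef_vecMulVec_self_star v).isHermitian⟩
  rw [← isStarProjection_outer.one_sub.isIdempotentElem]
  nth_rw 1 [← isStarProjection_outer.one_sub.isSelfAdjoint.star_eq]
  exact posSemidef_conjTranspose_mul_self _

end PositiveMatrices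

section TensorOperators

variable {m n p : Type*}

/-- The flip operator `e_a ⊗ e_b ↦ e_b ⊗ e_a` on `ℂⁿ ⊗ ℂⁿ`. -/
def flipOp (n : Type*) [DecidableEq n] : Matrix (n × n) (n × n) ℂ :=
  Equiv.Perm.permMatrix ℂ (Equiv.prodComm n n)

/-- The operator `X ⊗ N` on `(ℂᵐ ⊗ ℂⁿ) ⊗ ℂᵖ`, where `X` acts on the first factor and `N` on the
last two. -/
def assocKronecker (X : Matrix m m ℂ) (N : Matrix (n × p) (n × p) ℂ) :
    Matrix ((m × n) × p) ((m × n) × p) ℂ :=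
  (X ⊗ₖ N).submatrix (Equiv.prodAssoc m n p) (Equiv.prodAssoc m n p)

lemma flipOp_apply [DecidableEq n] (a b a' b' : n) :
    flipOp n (a, b) (a', b') = if b = a' ∧ a = b' then 1 else 0 := by
  simp [flipOp, PEquiv.toMatrix_apply, Equiv.toPEquiv_apply]

lemma isHermitian_flipOp [DecidableEq n] : (flipOp n).IsHermitian :=
  conjTranspose_permMatrix _

lemma flipOp_mul_self [Fintype n] [DecidableEq n] : flipOp n * flipOp n = 1 := by
  rw [flipOp, ← permMatrix_mul]
  exact permMatrix_one

lemma ptrRight_flipOp [Fintype n] [DecidableEq n] : ptrRight (flipOp n) = 1 := by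
  ext a a'
  simp [ptrRight, flipOp_apply, one_apply, eq_comm, ite_and]

lemma ptrRight_one_add_smul_flipOp [Fintype n] [DecidableEq n] (ε : ℂ) :
    ptrRight (1 + ε • flipOp n) = (Fintype.card n + ε) • (1 : Matrix n n ℂ) := by
  ext a a'
  simp only [ptrRight, Matrix.add_apply, one_apply, Prod.mk.injEq, and_true, Matrix.smul_apply,
    flipOp_apply, eq_comm, ite_and, smul_eq_mul, mul_ite, mul_one, mul_zero,
    Finset.sum_add_distrib, Finset.sum_ite_irrel, Finset.sum_const, Finset.card_univ, nsmul_eq_mul,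
    Finset.sum_ite_eq, Finset.mem_univ, if_true]
  by_cases h : a = a' <;> simp [h]

lemma posSemidef_one_add_flipOp [Finite n] [DecidableEq n] : (1 + flipOp n).PosSemidef := by
  have := Fintype.ofFinite n
  exact posSemidef_one_add_of_mul_self_eq_one isHermitian_flipOp flipOp_mul_self

lemma posSemidef_one_sub_flipOp [Finite n] [DecidableEq n] : (1 - flipOp n).PosSemidef := by
  have := Fintype.ofFinite n
  rw [sub_eq_add_neg]
  exact posSemidef_one_add_of_mul_self_eq_one isHermitian_flipOp.neg (by simp [flipOp_mul_self])

@[simp]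
lemma assocKronecker_apply (X : Matrix m m ℂ) (N : Matrix (n × p) (n × p) ℂ) (x y : (m × n) × p) :
    assocKronecker X N x y = X x.1.1 y.1.1 * N (x.1.2, x.2) (y.1.2, y.2) :=
  rfl

lemma posSemidef_assocKronecker [Finite m] [Finite n] [Finite p] {X : Matrix m m ℂ}
    {N : Matrix (n × p) (n × p) ℂ} (hX : X.PosSemidef) (hN : N.PosSemidef) :
    (assocKronecker X N).PosSemidef :=
  (hX.kronecker hN).submatrix _

lemma ptrRight_sub [Fintype p] (S T : Matrix (m × p) (m × p) ℂ) :
    ptrRight (S - T) = ptrRight S - ptrRight T := by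
  ext a a'
  simp [ptrRight]

lemma ptrRight_assocKronecker [Fintype p] (X : Matrix m m ℂ) (N : Matrix (n × p) (n × p) ℂ) :
    ptrRight (assocKronecker X N) = X ⊗ₖ ptrRight N := by
  ext x y
  simp [ptrRight, Finset.mul_sum]

lemma assocKronecker_one [DecidableEq n] [DecidableEq p] (X : Matrix m m ℂ) :
    assocKronecker X (1 : Matrix (n × p) (n × p) ℂ) = (X ⊗ₖ (1 : Matrix n n ℂ)) ⊗ₖ 1 := by
  rw [assocKronecker, ← one_kronecker_one, ← kronecker_assoc']
  rfl

variable [Fintype m] [Fintype n] [Fintype p]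

lemma trace_assocKronecker_mul_assocKronecker (X Y : Matrix m m ℂ)
    (N K : Matrix (n × p) (n × p) ℂ) :
    (assocKronecker X N * assocKronecker Y K).trace = (X * Y).trace * (N * K).trace := by
  rw [assocKronecker, assocKronecker, submatrix_mul_equiv, ← mul_kronecker_mul, ← trace_kronecker]
  exact Equiv.sum_comp (Equiv.prodAssoc m n p) fun x => ((X * Y) ⊗ₖ (N * K)) x x

lemma trace_mul_kronecker_one [DecidableEq p] (S : Matrix (m × p) (m × p) ℂ) (A : Matrix m m ℂ) :
    (S * (A ⊗ₖ 1)).trace = (ptrRight S * A).trace := by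
  simp only [trace, diag_apply, mul_apply, Fintype.sum_prod_type, kroneckerMap_apply, one_apply,
    mul_ite, mul_one, mul_zero, Finset.sum_ite_eq', Finset.mem_univ, if_true, ptrRight,
    Finset.sum_mul]
  exact Finset.sum_congr rfl fun _ _ => Finset.sum_comm

lemma ptrLeft_mul_kronecker_one_apply [DecidableEq p] (S : Matrix (m × p) (m × p) ℂ)
    (A : Matrix m m ℂ) (f f' : p) :
    ptrLeft (S * (A ⊗ₖ 1)) f f' = (S.submatrix (·, f) (·, f') * A).trace := by
  simp [ptrLeft, trace, mul_apply, Fintype.sum_prod_type, one_apply]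

lemma trace_mul_assocKronecker_one [DecidableEq n] [DecidableEq p]
    {S : Matrix ((m × n) × p) ((m × n) × p) ℂ} {σ : Matrix m m ℂ}
    (hS : ptrRight S = σ ⊗ₖ (1 : Matrix n n ℂ)) (X : Matrix m m ℂ) :
    (S * assocKronecker X (1 : Matrix (n × p) (n × p) ℂ)).trace =
      Fintype.card n * (σ * X).trace := by
  rw [assocKronecker_one, trace_mul_kronecker_one, hS, ← mul_kronecker_mul, trace_kronecker,
    mul_one, trace_one, mul_comm]

lemma trace_mul_assocKronecker_flipOp [DecidableEq n]
    (T : Matrix ((m × n) × n) ((m × n) × n) ℂ) (X : Matrix m m ℂ) :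
    (T * assocKronecker X (flipOp n)).trace =
      ∑ o, ∑ f, (T.submatrix (fun i => ((i, o), f)) (fun i => ((i, f), o)) * X).trace := by
  simp only [trace, diag_apply, mul_apply, Fintype.sum_prod_type, assocKronecker_apply,
    flipOp_apply, ite_and, mul_ite, mul_one, mul_zero, Finset.sum_ite_eq', Finset.mem_univ, if_true,
    submatrix_apply]
  rw [Finset.sum_comm]
  exact Finset.sum_congr rfl fun _ _ => Finset.sum_comm

end TensorOperators

section Action

variable {d e : ℕ}

lemma mconj_mconj (U : Matrix (Fin d) (Fin d) ℂ) : mconj (mconj U) = U := by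
  ext
  simp [mconj]

lemma mconj_mem_specialUnitaryGroup {U : Matrix (Fin d) (Fin d) ℂ}
    (hU : U ∈ specialUnitaryGroup (Fin d) ℂ) : mconj U ∈ specialUnitaryGroup (Fin d) ℂ := by
  obtain ⟨hU_unitary, hU_det⟩ := mem_specialUnitaryGroup_iff.mp hU
  refine mem_specialUnitaryGroup_iff.mpr ⟨map_star_mem_unitaryGroup_iff.mpr hU_unitary, ?_⟩
  rw [mconj, ← RingHom.mapMatrix_apply, ← RingHom.map_det, hU_det, map_one]

lemma act_apply (S : Matrix ((Fin d × Fin d) × Fin e) ((Fin d × Fin d) × Fin e) ℂ)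
    (U : Matrix (Fin d) (Fin d) ℂ) (f f' : Fin e) :
    act S U f f' =
      star (vec (mconj U)) ⬝ᵥ S.submatrix (·, f) (·, f') *ᵥ vec (mconj U) := by
  rw [act, ptrLeft_mul_kronecker_one_apply, choiProj, outer, mul_vecMulVec, trace_vecMulVec,
    dotProduct_comm]
  rfl

lemma act_sub (S T : Matrix ((Fin d × Fin d) × Fin e) ((Fin d × Fin d) × Fin e) ℂ)
    (U : Matrix (Fin d) (Fin d) ℂ) : act (S - T) U = act S U - act T U := by
  ext f f'
  simp only [act_apply, submatrix_sub, Pi.sub_apply, sub_mulVec, dotProduct_sub, Matrix.sub_apply]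

lemma act_assocKronecker_apply (X : Matrix (Fin d) (Fin d) ℂ)
    (N : Matrix (Fin d × Fin e) (Fin d × Fin e) ℂ) (U : Matrix (Fin d) (Fin d) ℂ) (f f' : Fin e) :
    act (assocKronecker X N) U f f' =
      (mconj U * Xᵀ * Uᵀ * N.submatrix (·, f) (·, f')).trace := by
  have block : (assocKronecker X N).submatrix (·, f) (·, f') = X ⊗ₖ N.submatrix (·, f) (·, f') :=
    rfl
  have conjTranspose_mconj : (mconj U)ᴴ = Uᵀ := by
    ext i j
    simp [mconj]
  rw [act_apply, block, kronecker_mulVec_vec, star_vec_dotProduct_vec, conjTranspose_mconj,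
    trace_mul_comm, mul_assoc, mul_assoc, trace_mul_comm]
  simp only [mul_assoc]

lemma act_assocKronecker_flipOp (X U : Matrix (Fin d) (Fin d) ℂ) :
    act (assocKronecker X (flipOp (Fin d))) U = mconj U * Xᵀ * Uᵀ := by
  ext f f'
  have block : (flipOp (Fin d)).submatrix (·, f) (·, f') = single f' f 1 := by
    ext o o'
    simp [flipOp_apply, single_apply, and_comm, eq_comm]
  rw [act_assocKronecker_apply, block, trace_mul_single]
  simp

lemma act_assocKronecker_one (X : Matrix (Fin d) (Fin d) ℂ) {U : Matrix (Fin d) (Fin d) ℂ}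
    (hU : U ∈ unitaryGroup (Fin d) ℂ) :
    act (assocKronecker X (1 : Matrix (Fin d × Fin e) (Fin d × Fin e) ℂ)) U = X.trace • 1 := by
  ext f f'
  have block : (1 : Matrix (Fin d × Fin e) (Fin d × Fin e) ℂ).submatrix (·, f) (·, f') =
      (1 : Matrix (Fin e) (Fin e) ℂ) f f' • 1 := by
    ext o o'
    simp [one_apply, ite_and]
  have trace_eq : (mconj U * Xᵀ * Uᵀ).trace = X.trace := by
    have h : Uᵀ * mconj U = 1 := mem_unitaryGroup_iff.mp (transpose_mem_unitaryGroup_iff.mpr hU)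
    rw [mul_assoc, trace_mul_comm, mul_assoc, h, mul_one, trace_transpose]
  rw [act_assocKronecker_apply, block, mul_smul_comm, mul_one, trace_smul, trace_eq,
    Matrix.smul_apply, smul_eq_mul, smul_eq_mul, mul_comm]

lemma act_assocKronecker_add_smul (X : Matrix (Fin d) (Fin d) ℂ)
    (N K : Matrix (Fin d × Fin e) (Fin d × Fin e) ℂ) (c : ℂ) (U : Matrix (Fin d) (Fin d) ℂ) :
    act (assocKronecker X (N + c • K)) U =
      act (assocKronecker X N) U + c • act (assocKronecker X K) U := by
  ext f f'
  simp only [act_assocKronecker_apply, submatrix_add, submatrix_smul, Pi.add_apply, Pi.smul_apply,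
    mul_add, mul_smul_comm, trace_add, trace_smul, Matrix.add_apply, Matrix.smul_apply]

end Action

section Conjugation

variable {d : ℕ}

/-- The supermap `S` deterministically and exactly implements unitary complex conjugation on the
known state `ρ`. -/
def ImplementsConjugation (S : Matrix ((Fin d × Fin d) × Fin d) ((Fin d × Fin d) × Fin d) ℂ)
    (ρ : Matrix (Fin d) (Fin d) ℂ) : Prop :=
  ∀ U : Matrix (Fin d) (Fin d) ℂ, U ∈ specialUnitaryGroup (Fin d) ℂ →
    act S U = mconj U * ρ * Uᵀ

theorem exists_isSuperchannel_implementsConjugation {ρ : Matrix (Fin d) (Fin d) ℂ} {ε : ℂ}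
    (hρ : ρ.trace = 1) (hε : ε * ε = 1) (hdε : 0 < d + ε)
    (h_flip : (1 + ε • flipOp (Fin d)).PosSemidef)
    (h_input : (ε • (ρ - (d + ε)⁻¹ • 1)).PosSemidef) :
    ∃ S, IsSuperchannel S ∧ ImplementsConjugation S ρ := by
  set X : Matrix (Fin d) (Fin d) ℂ := (ε • (ρ - (d + ε)⁻¹ • 1))ᵀ with hX
  have trace_X : X.trace = (d + ε)⁻¹ := by
    rw [hX, trace_transpose, trace_smul, trace_sub, trace_smul, hρ, trace_one, Fintype.card_fin,
      smul_eq_mul, smul_eq_mul]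
    field_simp [hdε.ne']
    linear_combination hε
  refine ⟨assocKronecker X (1 + ε • flipOp (Fin d)),
    ⟨posSemidef_assocKronecker h_input.transpose h_flip, (d + ε) • X,
      h_input.transpose.smul hdε.le, ?_, ?_⟩, fun U hU => ?_⟩
  · rw [trace_smul, trace_X, smul_eq_mul, mul_inv_cancel₀ hdε.ne']
  · rw [ptrRight_assocKronecker, ptrRight_one_add_smul_flipOp, Fintype.card_fin, kronecker_smul,
      smul_kronecker]
  · have hU' := specialUnitaryGroup_le_unitaryGroup hU
    have mconj_mul_transpose : mconj U * Uᵀ = 1 :=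
      mem_unitaryGroup_iff'.mp (transpose_mem_unitaryGroup_iff.mpr hU')
    rw [act_assocKronecker_add_smul, act_assocKronecker_one _ hU', act_assocKronecker_flipOp,
      trace_X, hX, transpose_transpose, mul_smul_comm, smul_mul_assoc, smul_smul, hε, one_smul,
      mul_sub, sub_mul, mul_smul_comm, smul_mul_assoc, mul_one, mconj_mul_transpose,
      add_sub_cancel]

lemma exists_forall_submatrix_eq_of_act_eq_zero {e : ℕ}
    {T : Matrix ((Fin d × Fin d) × Fin e) ((Fin d × Fin d) × Fin e) ℂ}
    (hT : ∀ U ∈ specialUnitaryGroup (Fin d) ℂ, act T U = 0) (f f' : Fin e) :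
    ∃ s t : Matrix (Fin d) (Fin d) ℂ, T.submatrix (·, f) (·, f') = s ⊗ₖ 1 + 1 ⊗ₖ t := by
  refine VanishesOnUnitaries.exists_eq_kronecker_one_add_one_kronecker
    (VanishesOnUnitaries.of_specialUnitaryGroup fun U hU => ?_)
  have h := act_apply T (mconj U) f f'
  rwa [hT _ (mconj_mem_specialUnitaryGroup hU), mconj_mconj, eq_comm] at h

lemma trace_mul_assocKronecker_flipOp_of_act_eq_zero
    {T : Matrix ((Fin d × Fin d) × Fin d) ((Fin d × Fin d) × Fin d) ℂ}
    (hT : ∀ U ∈ specialUnitaryGroup (Fin d) ℂ, act T U = 0)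
    {ω X : Matrix (Fin d) (Fin d) ℂ} (hω : ptrRight T = ω ⊗ₖ (1 : Matrix (Fin d) (Fin d) ℂ))
    (hX : X.trace = 0) :
    (T * assocKronecker X (flipOp (Fin d))).trace = (ω * X).trace := by
  rcases isEmpty_or_nonempty (Fin d) with _ | ⟨⟨o₀⟩⟩
  · simp [trace]
  choose s t hst using exists_forall_submatrix_eq_of_act_eq_zero hT
  have trace_block (o o' f f' : Fin d) :
      (T.submatrix (fun i => ((i, o), f)) (fun i => ((i, o'), f')) * X).trace =
        (1 : Matrix (Fin d) (Fin d) ℂ) o o' * (s f f' * X).trace := by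
    have block : T.submatrix (fun i => ((i, o), f)) (fun i => ((i, o'), f')) =
        (1 : Matrix (Fin d) (Fin d) ℂ) o o' • s f f' + t f f' o o' • 1 := by
      ext i i'
      have h := congr_fun₂ (hst f f') (i, o) (i', o')
      simp only [submatrix_apply, Matrix.add_apply, kroneckerMap_apply] at h
      simp [h, mul_comm]
    rw [block, add_mul, smul_mul_assoc, smul_mul_assoc, one_mul, trace_add, trace_smul, trace_smul,
      hX, smul_zero, add_zero, smul_eq_mul]
  have ω_eq : ω = ∑ f, T.submatrix (fun i => ((i, o₀), f)) (fun i => ((i, o₀), f)) := by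
    ext i i'
    have h := congr_fun₂ hω (i, o₀) (i', o₀)
    simp only [ptrRight, kroneckerMap_apply, one_apply_eq, mul_one] at h
    simp [Matrix.sum_apply, h]
  rw [trace_mul_assocKronecker_flipOp, ω_eq, Finset.sum_mul, trace_sum]
  simp only [trace_block, one_apply_eq, one_mul]
  simp [one_apply]

lemma ImplementsConjugation.trace_mul_assocKronecker_flipOp
    {S : Matrix ((Fin d × Fin d) × Fin d) ((Fin d × Fin d) × Fin d) ℂ}
    {ρ σ X : Matrix (Fin d) (Fin d) ℂ} (hS : ImplementsConjugation S ρ)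
    (hσ : ptrRight S = σ ⊗ₖ (1 : Matrix (Fin d) (Fin d) ℂ)) (hX : X.trace = 0) :
    (S * assocKronecker X (flipOp (Fin d))).trace =
      (σ * X).trace + ((d : ℂ) ^ 2 - 1) * (ρᵀ * X).trace := by
  set R := assocKronecker ρᵀ (flipOp (Fin d)) with hR
  have act_eq_zero (U) (hU : U ∈ specialUnitaryGroup (Fin d) ℂ) : act (S - R) U = 0 := by
    rw [act_sub, hS U hU, hR, act_assocKronecker_flipOp, transpose_transpose, sub_self]
  have ptrRight_eq : ptrRight (S - R) = (σ - ρᵀ) ⊗ₖ (1 : Matrix (Fin d) (Fin d) ℂ) := by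
    rw [ptrRight_sub, hσ, hR, ptrRight_assocKronecker, ptrRight_flipOp]
    ext
    simp [sub_mul]
  have h := trace_mul_assocKronecker_flipOp_of_act_eq_zero act_eq_zero ptrRight_eq hX
  rw [sub_mul, trace_sub, sub_mul, trace_sub, hR,
    trace_assocKronecker_mul_assocKronecker, flipOp_mul_self, trace_one, Fintype.card_prod,
    Fintype.card_fin] at h
  push_cast at h
  linear_combination h

/-- The operator, positive for `d ≥ 3`, whose pairing with a superchannel bounds the overlap with
`Pᵀ` of the states on which conjugation is possible, for `P` a rank-one projection. The coefficients
make its flip part `1 - d • P` traceless. -/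
def conjugationWitness (P : Matrix (Fin d) (Fin d) ℂ) :
    Matrix ((Fin d × Fin d) × Fin d) ((Fin d × Fin d) × Fin d) ℂ :=
  assocKronecker (1 - P) (((d : ℂ) - 2) • 1 + flipOp (Fin d)) +
    ((d : ℂ) - 1) • assocKronecker P (1 - flipOp (Fin d))

lemma posSemidef_conjugationWitness (hd : 3 ≤ d) {P : Matrix (Fin d) (Fin d) ℂ}
    (hP : P.PosSemidef) (hP_le : (1 - P).PosSemidef) : (conjugationWitness P).PosSemidef := by
  have shift : ((d : ℂ) - 2) • (1 : Matrix (Fin d × Fin d) (Fin d × Fin d) ℂ) + flipOp (Fin d) =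
      ((d : ℂ) - 3) • 1 + (1 + flipOp (Fin d)) := by
    module
  have d_ge : (3 : ℂ) ≤ d := by exact_mod_cast hd
  have d_sub_one_nonneg : 0 ≤ (d : ℂ) - 1 := by
    rw [sub_nonneg]
    exact_mod_cast (by omega : 1 ≤ d)
  rw [conjugationWitness, shift]
  exact (posSemidef_assocKronecker hP_le
      ((PosSemidef.one.smul (sub_nonneg.mpr d_ge)).add posSemidef_one_add_flipOp)).add
    ((posSemidef_assocKronecker hP posSemidef_one_sub_flipOp).smul d_sub_one_nonneg)

lemma conjugationWitness_eq (P : Matrix (Fin d) (Fin d) ℂ) :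
    conjugationWitness P =
      assocKronecker (((d : ℂ) - 2) • 1 + P) 1 +
        assocKronecker (1 - (d : ℂ) • P) (flipOp (Fin d)) := by
  ext x y
  simp only [conjugationWitness, assocKronecker_apply, Matrix.add_apply, Matrix.sub_apply,
    Matrix.smul_apply, smul_eq_mul]
  ring

lemma ImplementsConjugation.trace_mul_conjugationWitness
    {S : Matrix ((Fin d × Fin d) × Fin d) ((Fin d × Fin d) × Fin d) ℂ}
    {ρ σ P : Matrix (Fin d) (Fin d) ℂ} (hS : ImplementsConjugation S ρ)
    (hS_trace : ptrRight S = σ ⊗ₖ (1 : Matrix (Fin d) (Fin d) ℂ)) (hσ : σ.trace = 1)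
    (hρ : ρ.trace = 1) (hP : P.trace = 1) :
    (S * conjugationWitness P).trace =
      ((d : ℂ) - 1) ^ 2 + ((d : ℂ) ^ 2 - 1) * (1 - d * (ρᵀ * P).trace) := by
  have traceless : (1 - (d : ℂ) • P).trace = 0 := by
    simp [hP]
  rw [conjugationWitness_eq, mul_add, trace_add, trace_mul_assocKronecker_one hS_trace,
    hS.trace_mul_assocKronecker_flipOp hS_trace traceless]
  simp only [mul_add, mul_sub, mul_smul_comm, mul_one, trace_add, trace_sub, trace_smul,
    trace_transpose, smul_eq_mul, hσ, hρ, Fintype.card_fin]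
  ring

theorem ImplementsConjugation.trace_mul_outer_re_le
    {S : Matrix ((Fin d × Fin d) × Fin d) ((Fin d × Fin d) × Fin d) ℂ}
    {ρ : Matrix (Fin d) (Fin d) ℂ} (hS : ImplementsConjugation S ρ) (hS_super : IsSuperchannel S)
    (hd : 3 ≤ d) (hρ : ρ.trace = 1) {v : Fin d → ℂ} (hv : star v ⬝ᵥ v = 1) :
    (ρ * outer v).trace.re ≤ 2 / (d + 1) := by
  obtain ⟨hS_pos, σ, -, hσ, hS_trace⟩ := hS_super
  have hv_trace : (outer v)ᵀ.trace = 1 := by rw [trace_transpose, trace_outer hv]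
  have hv_compl : (1 - (outer v)ᵀ).PosSemidef := by
    simpa using (posSemidef_one_sub_outer hv).transpose
  have trace_eq : (ρᵀ * (outer v)ᵀ).trace = (ρ * outer v).trace := by
    rw [← transpose_mul, trace_transpose, trace_mul_comm]
  have trace_nonneg : 0 ≤ (S * conjugationWitness (outer v)ᵀ).trace :=
    trace_mul_nonneg hS_pos
      (posSemidef_conjugationWitness hd (posSemidef_vecMulVec_self_star v).transpose hv_compl)
  rw [hS.trace_mul_conjugationWitness hS_trace hσ hρ hv_trace, trace_eq] at trace_nonneg
  set x := (ρ * outer v).trace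
  have re_nonneg : 0 ≤ ((d : ℝ) - 1) * d * (2 - x.re * (d + 1)) := by
    have h := (Complex.le_def.mp trace_nonneg).1
    simp only [Complex.zero_re, pow_two, Complex.add_re, Complex.mul_re, Complex.sub_re,
      Complex.natCast_re, Complex.one_re, Complex.sub_im, Complex.natCast_im, Complex.one_im,
      sub_self, mul_zero, sub_zero, zero_mul, Complex.mul_im, add_zero, zero_sub, mul_neg,
      neg_zero] at h
    linear_combination h
  have d_ge : (3 : ℝ) ≤ d := by exact_mod_cast hd
  rw [le_div_iff₀ (by positivity), ← sub_nonneg]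
  exact nonneg_of_mul_nonneg_right re_nonneg (by nlinarith)

/-- The mixture `η|ψ⟩⟨ψ| + ((1 - η)/d)·1` of a pure state with the maximally mixed state. -/
def depolarizedState (ψ : Fin d → ℂ) (η : ℝ) : Matrix (Fin d) (Fin d) ℂ :=
  (η : ℂ) • outer ψ + (((1 - η) / d : ℝ) : ℂ) • 1

lemma trace_depolarizedState [NeZero d] {ψ : Fin d → ℂ} (hψ : star ψ ⬝ᵥ ψ = 1) (η : ℝ) :
    (depolarizedState ψ η).trace = 1 := by
  have d_ne_zero : (d : ℂ) ≠ 0 := NeZero.ne _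
  rw [depolarizedState, trace_add, trace_smul, trace_smul, trace_outer hψ, trace_one,
    Fintype.card_fin, smul_eq_mul, smul_eq_mul]
  push_cast
  field_simp
  ring

lemma trace_depolarizedState_mul_outer {ψ : Fin d → ℂ} (hψ : star ψ ⬝ᵥ ψ = 1) (η : ℝ) :
    (depolarizedState ψ η * outer ψ).trace = ((η + (1 - η) / d : ℝ) : ℂ) := by
  have outer_mul_outer : outer ψ * outer ψ = outer ψ := by
    simp [outer, vecMulVec_mul_vecMulVec, hψ]
  rw [depolarizedState, add_mul, smul_mul_assoc, smul_mul_assoc, one_mul, outer_mul_outer,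
    trace_add, trace_smul, trace_smul, trace_outer hψ, smul_eq_mul, smul_eq_mul, mul_one, mul_one,
    Complex.ofReal_add]

theorem ImplementsConjugation.le_of_depolarizedState
    {S : Matrix ((Fin d × Fin d) × Fin d) ((Fin d × Fin d) × Fin d) ℂ} {ψ : Fin d → ℂ} {η : ℝ}
    (hS : ImplementsConjugation S (depolarizedState ψ η)) (hS_super : IsSuperchannel S)
    (hd : 3 ≤ d) (hψ : star ψ ⬝ᵥ ψ = 1) : η ≤ 1 / ((d : ℝ) + 1) := by
  have : NeZero d := ⟨by omega⟩
  have d_ge : (3 : ℝ) ≤ d := by exact_mod_cast hd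
  have overlap_le := hS.trace_mul_outer_re_le hS_super hd (trace_depolarizedState hψ η) hψ
  rw [trace_depolarizedState_mul_outer hψ, Complex.ofReal_re] at overlap_le
  field_simp at overlap_le ⊢
  nlinarith

theorem exists_implementsConjugation_depolarizedState_of_le [NeZero d] {ψ : Fin d → ℂ}
    (hψ : star ψ ⬝ᵥ ψ = 1) {η : ℝ} (hη : 0 ≤ η) (hηd : η ≤ 1 / ((d : ℝ) + 1)) :
    ∃ S, IsSuperchannel S ∧ ImplementsConjugation S (depolarizedState ψ η) := by
  have d_pos : (0 : ℝ) < d := by exact_mod_cast NeZero.pos d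
  have coeff_nonneg : 0 ≤ (1 - η) / d - 1 / ((d : ℝ) + 1) := by
    rw [sub_nonneg, le_div_iff₀ d_pos]
    calc 1 / ((d : ℝ) + 1) * d = 1 - 1 / ((d : ℝ) + 1) := by field_simp; ring
      _ ≤ 1 - η := by linarith
  have decomposition : (1 : ℂ) • (depolarizedState ψ η - ((d : ℂ) + 1)⁻¹ • 1) =
      (η : ℂ) • outer ψ + (((1 - η) / d - 1 / (d + 1) : ℝ) : ℂ) • 1 := by
    rw [depolarizedState]
    push_cast
    module
  refine exists_isSuperchannel_implementsConjugation (ε := 1) (trace_depolarizedState hψ η)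
    (one_mul 1) (by positivity) (by simpa using posSemidef_one_add_flipOp) ?_
  rw [decomposition]
  exact ((posSemidef_vecMulVec_self_star ψ).smul (by simpa using hη)).add
    (PosSemidef.one.smul (Complex.zero_le_real.mpr coeff_nonneg))

theorem exists_implementsConjugation_depolarizedState_two {ψ : Fin 2 → ℂ} (hψ : star ψ ⬝ᵥ ψ = 1)
    {η : ℝ} (hη : η ∈ Set.Icc (0 : ℝ) 1) :
    ∃ S, IsSuperchannel S ∧ ImplementsConjugation S (depolarizedState ψ η) := by
  have coeff_nonneg : 0 ≤ (1 - η) / 2 := by linarith [hη.2]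
  have decomposition : (-1 : ℂ) • (depolarizedState ψ η - (((2 : ℕ) : ℂ) + -1)⁻¹ • 1) =
      (η : ℂ) • (1 - outer ψ) + (((1 - η) / 2 : ℝ) : ℂ) • 1 := by
    rw [depolarizedState]
    push_cast
    norm_num
    module
  refine exists_isSuperchannel_implementsConjugation (ε := -1) (trace_depolarizedState hψ η)
    (by norm_num) (by norm_num) ?_ ?_
  · simpa [← sub_eq_add_neg] using posSemidef_one_sub_flipOp (n := Fin 2)
  · rw [decomposition]
    exact ((posSemidef_one_sub_outer hψ).smul (Complex.zero_le_real.mpr hη.1)).add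
      (PosSemidef.one.smul (Complex.zero_le_real.mpr coeff_nonneg))

end Conjugation

/-- **Deterministic exact unitary complex conjugation on a known mixed state.** With `ρ = η|ψ⟩⟨ψ| + ((1−η)/d)·1`, a single-call deterministic superchannel implementing `U ↦ U̅ ρ Uᵀ` for all `U ∈ SU(d)` exists iff `d = 2` or `η ≤ 1/(d+1)`. -/
theorem mixed_state_deterministic_exact_conjugation
    (d : ℕ) (hd : 2 ≤ d) (ψ : Fin d → ℂ) (hψ : star ψ ⬝ᵥ ψ = 1)
    (η : ℝ) (hη : η ∈ Set.Icc (0 : ℝ) 1) :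
    (∃ S : Matrix ((Fin d × Fin d) × Fin d) ((Fin d × Fin d) × Fin d) ℂ,
        IsSuperchannel S ∧
        ∀ U : Matrix (Fin d) (Fin d) ℂ, U ∈ Matrix.specialUnitaryGroup (Fin d) ℂ →
          act S U =
            mconj U * ((η : ℂ) • outer ψ + (((1 - η) / d : ℝ) : ℂ) • (1 : Matrix (Fin d) (Fin d) ℂ)) * Uᵀ) ↔
      (d = 2 ∨ η ≤ 1 / ((d : ℝ) + 1)) := by
  constructor
  · rintro ⟨S, hS_super, hS⟩
    rcases hd.eq_or_lt with rfl | hd₃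
    · exact Or.inl rfl
    · exact Or.inr (ImplementsConjugation.le_of_depolarizedState hS hS_super hd₃ hψ)
  · rintro (rfl | hηd)
    · exact exists_implementsConjugation_depolarizedState_two hψ hη
    · have : NeZero d := ⟨by omega⟩
      exact exists_implementsConjugation_depolarizedState_of_le hψ hη.1 hηd
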